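/- For every integer n ≥ 0, ∑_{i=0}^{n} binom(2n, 2i) · 𝔠_{2i} · 𝔠_{2n-2i} = (2n)! · ∑_{l=0}^{n} (-1)^{n-l} (2n-2l-3)!! (2l-1) / (2^{n-l} (n-l)! (2l)!) · 𝔠_{2l}. -/

import Mathlib

/-- Stirling numbers of the first kind with level 2. -/
def T2 : ℕ → ℕ → ℕ
  | 0, 0 => 1
  | 0, _ + 1 => 0
  | _ + 1, 0 => 0
  | n + 1, m + 1 => T2 n m + n ^ 2 * T2 n (m + 1)

/-- Cauchy numbers with level 2: `cauchy2 n = 𝔠_{2n}`. -/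
def cauchy2 (n : ℕ) : ℚ :=
  ∑ m ∈ Finset.range (n + 1), (-4 : ℚ) ^ (n - m) * (T2 n m : ℚ) / (2 * (m : ℚ) + 1)

/-- `odFact i = (2i-1)!!`, with `odFact 0 = (-1)!! = 1`. -/
def odFact : ℕ → ℚ
  | 0 => 1
  | i + 1 => (2 * (i : ℚ) + 1) * odFact i

/-- `ddf j = (2j-1)!!`, the odd double factorial extended to all integers:
for `j ≥ 0` it is `(2j-1)(2j-3)⋯1` (with `(-1)!! = 1`), and for `j = -i < 0`
it is `(-(2i+1))!! = (-1)^i/(2i-1)!!`. -/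
def ddf (j : ℤ) : ℚ :=
  if 0 ≤ j then odFact j.toNat else (-1 : ℚ) ^ (-j).toNat / odFact (-j).toNat

/-!
Let `A = arsinh X` and `S = √(1 + X ^ 2)`, so that `S A' = 1`. Since `S d/dX` acts on series in `A`
as `d/dA`, its square sends `A ^ (k + 2)` to `(k + 2) (k + 1) A ^ k`; on coefficients this is the
recurrence for `(-4) ^ (n - m) T(n, m)`, whence `A ^ (2m) / (2m)!` is the exponential generating
function of these numbers. Summing against `1 / (2m + 1)` shows that the exponential generating
function of the Cauchy numbers is `F = sinh A / A = X / A`. Differentiating `F A = X` and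
multiplying by `S F` gives `F ^ 2 = S (F - X F')`, and the theorem compares coefficients of
`X ^ (2n)`, the double factorials being the binomial coefficients of `1 / 2` that occur in `S`.
-/

open PowerSeries
open scoped Nat

theorem coeff_X_mul_derivative {R : Type*} [CommSemiring R] (f : R⟦X⟧) (n : ℕ) :
    coeff n (X * d⁄dX R f) = n * coeff n f := by
  cases n with
  | zero => simp
  | succ n => rw [coeff_succ_X_mul, coeff_derivative, Nat.cast_succ, mul_comm]

theorem X_mul_derivative_expand {R : Type*} [CommRing R] {p : ℕ} (hp : p ≠ 0) (f : R⟦X⟧) :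
    X * d⁄dX R (expand p hp f) = expand p hp (p • (X * d⁄dX R f)) := by
  ext n
  rw [coeff_X_mul_derivative, coeff_expand, coeff_expand]
  split_ifs with h
  · obtain ⟨k, rfl⟩ := h
    rw [Nat.mul_div_cancel_left k (Nat.pos_of_ne_zero hp), map_nsmul, coeff_X_mul_derivative,
      nsmul_eq_mul, Nat.cast_mul, mul_assoc]
  · rw [mul_zero]

theorem expand_injective {R : Type*} [CommRing R] {p : ℕ} (hp : p ≠ 0) :
    Function.Injective (expand p hp : R⟦X⟧ →ₐ[R] R⟦X⟧) := fun f g h => by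
  ext n
  rw [← coeff_expand_mul p hp f, h, coeff_expand_mul]

theorem constantCoeff_subst_of_constantCoeff_eq_zero {R : Type*} [CommRing R] {a : R⟦X⟧}
    (ha : constantCoeff a = 0) (f : R⟦X⟧) : constantCoeff (f.subst a) = constantCoeff f := by
  rw [← coeff_zero_eq_constantCoeff_apply, coeff_subst' (.of_constantCoeff_zero' ha),
    finsum_eq_single _ 0 fun d hd => by simp [ha, hd]]
  simp

theorem coeff_subst_eq_sum_range {R : Type*} [CommRing R] {a : R⟦X⟧}
    (ha : HasSubst a) (f : R⟦X⟧) {n N : ℕ} (h : ∀ m, N ≤ m → coeff n (a ^ m) = 0) :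
    coeff n (f.subst a) = ∑ m ∈ Finset.range N, coeff m f * coeff n (a ^ m) := by
  rw [coeff_subst' ha]
  refine finsum_eq_sum_of_support_subset _ fun m hm => ?_
  contrapose! hm
  simp [h m (by simpa using hm)]

theorem subst_expand {R : Type*} [CommRing R] {p : ℕ} (hp : p ≠ 0) {a : R⟦X⟧}
    (ha : HasSubst a) (f : R⟦X⟧) : (expand p hp f).subst a = f.subst (a ^ p) := by
  rw [expand_apply, subst_comp_subst_apply (.X_pow hp) ha, subst_pow ha, subst_X ha]

theorem succ_mul_ringChoose_succ {R : Type*} [CommRing R] [BinomialRing R] (r : R) (k : ℕ) :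
    (k + 1) * Ring.choose r (k + 1) = (r - k) * Ring.choose r k := by
  simpa [mul_comm] using Ring.choose_smul_choose r (Nat.le_add_right k 1)

theorem ddf_natCast (k : ℕ) : ddf k = odFact k := by simp [ddf]

theorem ddf_natCast_eq_mul_ddf_sub_one (k : ℕ) : ddf k = (2 * k - 1) * ddf (k - 1) := by
  cases k with
  | zero => simp [ddf, odFact]
  | succ k =>
    rw [Nat.cast_succ, add_sub_cancel_right, ← Nat.cast_succ, ddf_natCast, ddf_natCast, odFact]
    push_cast
    ring

theorem ringChoose_one_half (k : ℕ) :
    Ring.choose (1 / 2 : ℚ) k = -((-1) ^ k * ddf (k - 1) / (2 ^ k * k !)) := by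
  induction k with
  | zero => simp [ddf, odFact]
  | succ k ih =>
    have hrec := succ_mul_ringChoose_succ (1 / 2 : ℚ) k
    rw [ih] at hrec
    rw [Nat.cast_succ, add_sub_cancel_right, ddf_natCast_eq_mul_ddf_sub_one, Nat.factorial_succ]
    push_cast
    apply mul_left_cancel₀ (k.cast_add_one_ne_zero : (k : ℚ) + 1 ≠ 0)
    rw [hrec]
    field_simp
    ring

section Hyperbolic

variable (K : Type*) [Field K]

/-- The Taylor series of `sinh`. -/
noncomputable def sinhSeries : K⟦X⟧ :=
  mk fun n => if Even n then 0 else (n ! : K)⁻¹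

/-- The Taylor series of `cosh`. -/
noncomputable def coshSeries : K⟦X⟧ :=
  mk fun n => if Even n then (n ! : K)⁻¹ else 0

/-- The even power series `sinh X / X`, whose composite with `arsinh` generates the Cauchy numbers
with level 2. -/
noncomputable def sinhcSeries : K⟦X⟧ :=
  expand 2 two_ne_zero (mk fun m => ((2 * m + 1)! : K)⁻¹)

theorem constantCoeff_sinhSeries : constantCoeff (sinhSeries K) = 0 := by
  simp [sinhSeries, ← coeff_zero_eq_constantCoeff_apply]

theorem constantCoeff_coshSeries : constantCoeff (coshSeries K) = 1 := by
  simp [coshSeries, ← coeff_zero_eq_constantCoeff_apply]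

theorem isUnit_coeff_one_sinhSeries : IsUnit (coeff 1 (sinhSeries K)) := by
  simp [sinhSeries]

theorem sinhSeries_eq_X_mul_sinhcSeries : sinhSeries K = X * sinhcSeries K := by
  ext n
  rcases n with _ | n
  · simp [constantCoeff_sinhSeries]
  · rw [coeff_succ_X_mul, sinhcSeries, coeff_expand, sinhSeries, coeff_mk]
    rcases Nat.even_or_odd' n with ⟨k, rfl | rfl⟩ <;> simp [Nat.even_add_one]

/-- The Taylor series of `arsinh`, as the compositional inverse of `sinhSeries`. -/
noncomputable def arsinhSeries : K⟦X⟧ :=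
  (sinhSeries K).substInvOfIsUnit (isUnit_coeff_one_sinhSeries K)

theorem constantCoeff_arsinhSeries : constantCoeff (arsinhSeries K) = 0 :=
  constantCoeff_substInvOfIsUnit _ _

theorem hasSubst_arsinhSeries : HasSubst (arsinhSeries K) :=
  .of_constantCoeff_zero' (constantCoeff_arsinhSeries K)

theorem sinhSeries_subst_arsinhSeries : (sinhSeries K).subst (arsinhSeries K) = X :=
  subst_substInvOfIsUnit_right _ (constantCoeff_sinhSeries K) _

theorem sinhcSeries_subst_mul_arsinhSeries :
    (sinhcSeries K).subst (arsinhSeries K) * arsinhSeries K = X := by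
  have hA := hasSubst_arsinhSeries K
  calc (sinhcSeries K).subst (arsinhSeries K) * arsinhSeries K
      = (sinhSeries K).subst (arsinhSeries K) := by
        rw [sinhSeries_eq_X_mul_sinhcSeries, subst_mul hA, subst_X hA, mul_comm]
    _ = X := sinhSeries_subst_arsinhSeries K

variable [CharZero K]

theorem derivative_sinhSeries : d⁄dX K (sinhSeries K) = coshSeries K := by
  ext n
  have hn : (n : K) + 1 ≠ 0 := n.cast_add_one_ne_zero
  by_cases h : Even n <;>
    simp [coeff_derivative, sinhSeries, coshSeries, Nat.even_add_one, Nat.factorial_succ, h, hn]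

theorem derivative_coshSeries : d⁄dX K (coshSeries K) = sinhSeries K := by
  ext n
  have hn : (n : K) + 1 ≠ 0 := n.cast_add_one_ne_zero
  by_cases h : Even n <;>
    simp [coeff_derivative, sinhSeries, coshSeries, Nat.even_add_one, Nat.factorial_succ, h, hn]

theorem coshSeries_sq : coshSeries K ^ 2 = 1 + sinhSeries K ^ 2 := by
  refine derivative.ext ?_ ?_
  · simp only [map_add, derivative_pow, derivative_one, derivative_sinhSeries,
      derivative_coshSeries]
    ring
  · simp [constantCoeff_sinhSeries, constantCoeff_coshSeries]

/-- The binomial series of `√(1 + X ^ 2)`, the reciprocal of the derivative of `arsinh`. -/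
noncomputable def sqrtOneAddSqSeries : K⟦X⟧ :=
  expand 2 two_ne_zero (PowerSeries.binomialSeries K (1 / 2 : ℚ))

theorem sqrtOneAddSqSeries_sq : sqrtOneAddSqSeries K ^ 2 = 1 + X ^ 2 := by
  have hhalf : PowerSeries.binomialSeries K (1 / 2 : ℚ) ^ 2 = 1 + X := by
    rw [sq, ← binomialSeries_add, add_halves, ← Nat.cast_one, binomialSeries_nat, pow_one]
  rw [sqrtOneAddSqSeries, ← map_pow, hhalf, map_add, map_one, expand_X]

theorem coshSeries_subst_arsinhSeries :
    (coshSeries K).subst (arsinhSeries K) = sqrtOneAddSqSeries K := by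
  have hA := hasSubst_arsinhSeries K
  have hsq : (coshSeries K).subst (arsinhSeries K) ^ 2 = sqrtOneAddSqSeries K ^ 2 := by
    rw [sqrtOneAddSqSeries_sq, ← subst_pow hA, coshSeries_sq, subst_add hA, subst_pow hA,
      sinhSeries_subst_arsinhSeries, ← coe_substAlgHom hA, map_one]
  refine (sq_eq_sq_iff_eq_or_eq_neg.mp hsq).resolve_right fun hneg => ?_
  have h := congrArg constantCoeff hneg
  rw [constantCoeff_subst_of_constantCoeff_eq_zero (constantCoeff_arsinhSeries K),
    constantCoeff_coshSeries, map_neg, sqrtOneAddSqSeries, constantCoeff_expand,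
    binomialSeries_constantCoeff] at h
  norm_num [eq_neg_iff_add_eq_zero] at h

theorem sqrtOneAddSqSeries_mul_derivative_arsinhSeries :
    sqrtOneAddSqSeries K * d⁄dX K (arsinhSeries K) = 1 := by
  rw [← coshSeries_subst_arsinhSeries, ← derivative_sinhSeries,
    ← derivative_subst (hasSubst_arsinhSeries K), sinhSeries_subst_arsinhSeries, derivative_X]

variable {K}

theorem sqrtOneAddSqSeries_mul_derivative_subst_arsinhSeries (f : K⟦X⟧) :
    sqrtOneAddSqSeries K * d⁄dX K (f.subst (arsinhSeries K)) =
      (d⁄dX K f).subst (arsinhSeries K) := by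
  rw [derivative_subst (hasSubst_arsinhSeries K), mul_left_comm,
    sqrtOneAddSqSeries_mul_derivative_arsinhSeries, mul_one]

theorem sqrtOneAddSqSeries_mul_derivative_self :
    sqrtOneAddSqSeries K * d⁄dX K (sqrtOneAddSqSeries K) = X := by
  rw [← sinhSeries_subst_arsinhSeries, ← derivative_coshSeries,
    ← sqrtOneAddSqSeries_mul_derivative_subst_arsinhSeries, coshSeries_subst_arsinhSeries]

theorem sqrtOneAddSqSeries_mul_derivative_sqrtOneAddSqSeries_mul_derivative (f : K⟦X⟧) :
    sqrtOneAddSqSeries K * d⁄dX K (sqrtOneAddSqSeries K * d⁄dX K f) =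
      d⁄dX K (d⁄dX K f) + X * d⁄dX K (X * d⁄dX K f) := by
  simp only [Derivation.leibniz, smul_eq_mul, derivative_X]
  linear_combination d⁄dX K (d⁄dX K f) * sqrtOneAddSqSeries_sq K +
    d⁄dX K f * sqrtOneAddSqSeries_mul_derivative_self (K := K)

theorem coeff_subst_arsinhSeries_add_two (f : K⟦X⟧) (n : ℕ) :
    (n + 2) * (n + 1) * coeff (n + 2) (f.subst (arsinhSeries K)) +
        n ^ 2 * coeff n (f.subst (arsinhSeries K)) =
      coeff n ((d⁄dX K (d⁄dX K f)).subst (arsinhSeries K)) := by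
  rw [← sqrtOneAddSqSeries_mul_derivative_subst_arsinhSeries,
    ← sqrtOneAddSqSeries_mul_derivative_subst_arsinhSeries,
    sqrtOneAddSqSeries_mul_derivative_sqrtOneAddSqSeries_mul_derivative, map_add,
    coeff_X_mul_derivative, coeff_X_mul_derivative, coeff_derivative, coeff_derivative]
  push_cast
  ring

theorem coeff_arsinhSeries_pow_add_two (k n : ℕ) :
    (n + 2) * (n + 1) * coeff (n + 2) (arsinhSeries K ^ (k + 2)) +
        n ^ 2 * coeff n (arsinhSeries K ^ (k + 2)) =
      (k + 2) * (k + 1) * coeff n (arsinhSeries K ^ k) := by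
  have hA := hasSubst_arsinhSeries K
  have hpow (j : ℕ) : arsinhSeries K ^ j = (X ^ j : K⟦X⟧).subst (arsinhSeries K) := by
    rw [subst_pow hA, subst_X hA]
  have hderiv : d⁄dX K (d⁄dX K (X ^ (k + 2) : K⟦X⟧)) = ((k + 2) * (k + 1) : K) • X ^ k := by
    ext j
    rw [coeff_derivative, coeff_derivative, coeff_X_pow, coeff_smul, coeff_X_pow]
    rcases eq_or_ne j k with rfl | h
    · push_cast
      simp only [if_true, smul_eq_mul]
      ring
    · simp [h]
  rw [hpow, hpow, coeff_subst_arsinhSeries_add_two, hderiv, subst_smul hA, coeff_smul, smul_eq_mul]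

end Hyperbolic

theorem T2_eq_zero_of_lt {n m : ℕ} (h : n < m) : T2 n m = 0 := by
  induction n generalizing m with
  | zero => obtain ⟨m, rfl⟩ := Nat.exists_eq_succ_of_ne_zero h.ne'; rfl
  | succ n ih =>
    obtain ⟨m, rfl⟩ := Nat.exists_eq_succ_of_ne_zero (Nat.ne_zero_of_lt h)
    rw [T2, ih (by omega), ih (by omega), zero_add, mul_zero]

theorem neg_four_pow_mul_T2_succ_succ {R : Type*} [CommRing R] (n m : ℕ) :
    (-4 : R) ^ (n + 1 - (m + 1)) * T2 (n + 1) (m + 1) =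
      (-4) ^ (n - m) * T2 n m - (2 * n) ^ 2 * ((-4) ^ (n - (m + 1)) * T2 n (m + 1)) := by
  rw [T2, Nat.add_sub_add_right]
  rcases lt_or_ge m n with h | h
  · rw [show n - m = n - (m + 1) + 1 by omega]
    push_cast
    ring
  · simp [T2_eq_zero_of_lt (Nat.lt_succ_of_le h)]

theorem cast_factorial_two_mul_succ {R : Type*} [CommSemiring R] (n : ℕ) :
    ((2 * (n + 1))! : R) = (2 * n + 2) * (2 * n + 1) * (2 * n)! := by
  rw [mul_add_one, Nat.factorial_succ, Nat.factorial_succ]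
  push_cast
  ring

theorem coeff_two_mul_arsinhSeries_pow {K : Type*} [Field K] [CharZero K] (n m : ℕ) :
    coeff (2 * n) (arsinhSeries K ^ (2 * m)) =
      (2 * m)! / (2 * n)! * ((-4) ^ (n - m) * T2 n m) := by
  have hA := constantCoeff_arsinhSeries K
  induction n generalizing m with
  | zero => cases m <;> simp [T2, hA]
  | succ n ih =>
    cases m with
    | zero => simp [T2, coeff_one]
    | succ m =>
      have hrec := coeff_arsinhSeries_pow_add_two (K := K) (2 * m) (2 * n)
      rw [← mul_add_one 2 m, ← mul_add_one 2 n, ih, ih, cast_factorial_two_mul_succ] at hrec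
      push_cast at hrec
      rw [neg_four_pow_mul_T2_succ_succ, cast_factorial_two_mul_succ, cast_factorial_two_mul_succ]
      have hn1 : 2 * (n : K) + 1 ≠ 0 := mod_cast (2 * n).succ_ne_zero
      have hn2 : 2 * (n : K) + 2 ≠ 0 := mod_cast (2 * n + 1).succ_ne_zero
      apply mul_left_cancel₀ (mul_ne_zero hn2 hn1)
      rw [eq_sub_of_add_eq hrec]
      field_simp

theorem coeff_two_mul_add_one_arsinhSeries_pow {K : Type*} [Field K] [CharZero K] (n m : ℕ) :
    coeff (2 * n + 1) (arsinhSeries K ^ (2 * m)) = 0 := by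
  induction n generalizing m with
  | zero =>
    cases m with
    | zero => simp [coeff_one]
    | succ m =>
      have hX : X ∣ arsinhSeries K := X_dvd_iff.mpr (constantCoeff_arsinhSeries K)
      exact X_pow_dvd_iff.mp (pow_dvd_pow_of_dvd hX _) _ (by omega)
  | succ n ih =>
    cases m with
    | zero => simp [coeff_one]
    | succ m =>
      have hrec := coeff_arsinhSeries_pow_add_two (K := K) (2 * m) (2 * n + 1)
      rw [← mul_add_one 2 m, ih, ih, mul_zero, mul_zero, add_zero] at hrec
      have hn : (((2 * n + 1 : ℕ) : K) + 2) * ((2 * n + 1 : ℕ) + 1) ≠ 0 := by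
        norm_cast
      exact (mul_eq_zero.mp hrec).resolve_left hn

/-- The series `∑ 𝔠_{2n} X ^ n / (2n)!`. The variable stands for the square of the usual one, so the
exponential generating function of the Cauchy numbers with level 2 is its image under
`X ↦ X ^ 2`. -/
noncomputable def cauchy2Series : ℚ⟦X⟧ :=
  mk fun n => cauchy2 n / (2 * n)!

theorem sinhcSeries_subst_arsinhSeries :
    (sinhcSeries ℚ).subst (arsinhSeries ℚ) = expand 2 two_ne_zero cauchy2Series := by
  have hA := hasSubst_arsinhSeries ℚ
  have hA2 : HasSubst (arsinhSeries ℚ ^ 2) :=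
    .of_constantCoeff_zero' (by simp [constantCoeff_arsinhSeries])
  rw [sinhcSeries, subst_expand two_ne_zero hA]
  ext n
  rcases Nat.even_or_odd' n with ⟨k, rfl | rfl⟩
  · rw [coeff_subst_eq_sum_range hA2 (N := k + 1), coeff_expand_mul, cauchy2Series, coeff_mk,
      cauchy2, Finset.sum_div]
    · refine Finset.sum_congr rfl fun m _ => ?_
      rw [← pow_mul, coeff_two_mul_arsinhSeries_pow, coeff_mk, Nat.factorial_succ]
      push_cast
      field_simp
    · intro m hm
      rw [← pow_mul, coeff_two_mul_arsinhSeries_pow, T2_eq_zero_of_lt hm]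
      simp
  · have hodd (m : ℕ) (_ : 0 ≤ m) : coeff (2 * k + 1) ((arsinhSeries ℚ ^ 2) ^ m) = 0 := by
      rw [← pow_mul, coeff_two_mul_add_one_arsinhSeries_pow]
    rw [coeff_subst_eq_sum_range hA2 _ hodd, coeff_expand_of_not_dvd _ _ _ (by omega),
      Finset.sum_range_zero]

theorem expand_cauchy2Series_sq :
    expand 2 two_ne_zero cauchy2Series ^ 2 = sqrtOneAddSqSeries ℚ *
      (expand 2 two_ne_zero cauchy2Series - X * d⁄dX ℚ (expand 2 two_ne_zero cauchy2Series)) := by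
  have hFA := sinhcSeries_subst_mul_arsinhSeries ℚ
  rw [sinhcSeries_subst_arsinhSeries] at hFA
  set F := expand 2 two_ne_zero cauchy2Series
  set A := arsinhSeries ℚ
  have hA := sqrtOneAddSqSeries_mul_derivative_arsinhSeries ℚ
  have hderiv : F * d⁄dX ℚ A + A * d⁄dX ℚ F = 1 := by
    rw [← smul_eq_mul, ← smul_eq_mul, ← Derivation.leibniz, hFA, derivative_X]
  linear_combination (-F ^ 2) * hA + sqrtOneAddSqSeries ℚ * F * hderiv -
    sqrtOneAddSqSeries ℚ * d⁄dX ℚ F * hFA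

theorem cauchy2Series_sq : cauchy2Series ^ 2 =
    (cauchy2Series - 2 • (X * d⁄dX ℚ cauchy2Series)) *
      PowerSeries.binomialSeries ℚ (1 / 2 : ℚ) := by
  apply expand_injective two_ne_zero
  rw [map_pow, expand_cauchy2Series_sq, X_mul_derivative_expand, sqrtOneAddSqSeries, map_mul,
    map_sub, mul_comm]

theorem sum_choose_mul_cauchy2_mul_cauchy2 (n : ℕ) :
    ∑ i ∈ Finset.range (n + 1), ((2 * n).choose (2 * i) : ℚ) * cauchy2 i * cauchy2 (n - i) =
      (2 * n)! * coeff n (cauchy2Series ^ 2) := by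
  rw [sq, coeff_mul, Finset.Nat.sum_antidiagonal_eq_sum_range_succ_mk, Finset.mul_sum]
  refine Finset.sum_congr rfl fun i hi => ?_
  have hin : i ≤ n := Finset.mem_range_succ_iff.mp hi
  rw [Nat.cast_choose ℚ (Nat.mul_le_mul_left 2 hin), ← Nat.mul_sub, cauchy2Series, coeff_mk,
    coeff_mk]
  ring

theorem coeff_cauchy2Series_sub_mul_binomialSeries (n : ℕ) :
    coeff n ((cauchy2Series - 2 • (X * d⁄dX ℚ cauchy2Series)) *
        PowerSeries.binomialSeries ℚ (1 / 2 : ℚ)) =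
      ∑ l ∈ Finset.range (n + 1),
        (-1) ^ (n - l) * ddf (n - l - 1) * (2 * l - 1) /
          (2 ^ (n - l) * (n - l)! * (2 * l)!) * cauchy2 l := by
  rw [coeff_mul, Finset.Nat.sum_antidiagonal_eq_sum_range_succ_mk]
  refine Finset.sum_congr rfl fun l hl => ?_
  rw [map_sub, map_nsmul, coeff_X_mul_derivative, cauchy2Series, coeff_mk, binomialSeries_coeff,
    ringChoose_one_half, Nat.cast_sub (Finset.mem_range_succ_iff.mp hl), nsmul_eq_mul, smul_eq_mul]
  push_cast
  ring

theorem statement2 (n : ℕ) :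
    ∑ i ∈ Finset.range (n + 1),
        (Nat.choose (2 * n) (2 * i) : ℚ) * cauchy2 i * cauchy2 (n - i) =
    (Nat.factorial (2 * n) : ℚ) * ∑ l ∈ Finset.range (n + 1),
        (-1 : ℚ) ^ (n - l) * ddf ((n : ℤ) - l - 1) * (2 * (l : ℚ) - 1) /
          ((2 : ℚ) ^ (n - l) * (Nat.factorial (n - l) : ℚ) * (Nat.factorial (2 * l) : ℚ)) *
          cauchy2 l := by
  rw [sum_choose_mul_cauchy2_mul_cauchy2, cauchy2Series_sq,
    coeff_cauchy2Series_sub_mul_binomialSeries]
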